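/- For every C₁ > 0 there exist γ₀ > 0 and C > 0, depending only on C₁, such that the following holds. Let m₃, m₄ ∈ ℝ satisfy m₄ − m₃² − 1 ≥ 0 and m₄ ≤ C₁, and let γ ∈ (0, γ₀). Then there exist a probability space carrying independent real random variables ζ_γ and ζ_G, where ζ_G is standard Gaussian (mean 0, variance 1) and ζ_γ has subexponential tails (there exist C₂ > 0 and θ > 1 with P(|ζ_γ| > x) ≤ C₂ e^{−x^{1/θ}} for all x > 0), such that the random variable ζ′ := (1 − γ)^{1/2} ζ_γ + γ^{1/2} ζ_G satisfies E[ζ′] = 0, E[ζ′²] = 1, E[ζ′³] = m₃, and |E[ζ′⁴] − m₄| ≤ C γ. -/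

import Mathlib

open MeasureTheory ProbabilityTheory

lemma gauss_step (n : ℕ) (q q' : ℝ → ℝ)
    (h : ∀ t, ∫ x, x ^ n * Real.exp (t * x) ∂(gaussianReal 0 1) = q t * Real.exp (t ^ 2 / 2))
    (hq : ∀ t, HasDerivAt q (q' t) t) (t : ℝ) :
    ∫ x, x ^ (n + 1) * Real.exp (t * x) ∂(gaussianReal 0 1)
      = (q' t + t * q t) * Real.exp (t ^ 2 / 2) := by
  have h1 := hasDerivAt_integral_pow_mul_exp_real (X := id) (μ := gaussianReal 0 1) (t := t)
    (by simp [integrableExpSet_id_gaussianReal]) n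
  simp only [id] at h1
  rw [funext h] at h1
  have h2 : HasDerivAt (fun t : ℝ => t ^ 2 / 2) t t := by
    have := ((hasDerivAt_id t).pow 2).div_const 2
    simpa using this
  have h3 := (hq t).mul h2.exp
  rw [h1.unique h3]
  ring

lemma gauss_moments : (∫ x, x ∂(gaussianReal 0 1)) = 0 ∧ (∫ x, x ^ 2 ∂(gaussianReal 0 1)) = 1 ∧
    (∫ x, x ^ 3 ∂(gaussianReal 0 1)) = 0 ∧ (∫ x, x ^ 4 ∂(gaussianReal 0 1)) = 3 := by
  have h0 : ∀ t, ∫ x, x ^ 0 * Real.exp (t * x) ∂(gaussianReal 0 1)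
      = (fun _ => 1 : ℝ → ℝ) t * Real.exp (t ^ 2 / 2) := by
    intro t
    have := congrFun (mgf_id_gaussianReal (μ := 0) (v := 1)) t
    simpa [mgf] using this
  have h1 := gauss_step 0 _ (fun _ => 0) h0 (fun t => hasDerivAt_const t 1)
  have h2 := gauss_step 1 (fun t => t) (fun _ => 1) (fun t => by rw [h1 t]; ring)
    (fun t => hasDerivAt_id t)
  have h3 := gauss_step 2 (fun t => 1 + t ^ 2) (fun t => 2 * t) (fun t => by rw [h2 t]; ring)
    (fun t => by simpa using ((hasDerivAt_id t).pow 2).const_add 1)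
  have h4 := gauss_step 3 (fun t => 3 * t + t ^ 3) (fun t => 3 + 3 * t ^ 2)
    (fun t => by rw [h3 t]; ring)
    (fun t => by
      have h5 := ((hasDerivAt_id t).const_mul 3).add ((hasDerivAt_id t).pow 3)
      have h6 : (3 : ℝ) * 1 + ((3 : ℕ) : ℝ) * id t ^ (3 - 1) * 1 = 3 + 3 * t ^ 2 := by simp
      rw [h6] at h5
      exact h5)
  have e1 := h1 0
  have e2 := h2 0
  have e3 := h3 0
  have e4 := h4 0
  simp at e1 e2 e3 e4
  exact ⟨integral_id_gaussianReal, e2, e3, e4⟩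

lemma gauss_int (n : ℕ) : Integrable (fun x : ℝ => x ^ n) (gaussianReal 0 1) := by
  have := (memLp_id_gaussianReal (μ := 0) (v := 1) n).integrable_norm_pow'
  refine (integrable_norm_iff (by fun_prop)).1 ?_
  simpa using this

noncomputable def mu3 (p q r x y : ℝ) : Measure ℝ :=
  ENNReal.ofReal p • Measure.dirac x + ENNReal.ofReal q • Measure.dirac y
    + ENNReal.ofReal r • Measure.dirac 0

lemma mu3_prob {p q r : ℝ} (hp : 0 ≤ p) (hq : 0 ≤ q) (hr : 0 ≤ r) (h : p + q + r = 1) (x y : ℝ) :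
    IsProbabilityMeasure (mu3 p q r x y) := by
  constructor
  simp [mu3]
  rw [← ENNReal.ofReal_add hp hq, ← ENNReal.ofReal_add (by positivity) hr, h]
  simp

lemma dirac_int (c x : ℝ) (f : ℝ → ℝ) : 
    Integrable f (ENNReal.ofReal c • Measure.dirac x) :=
  (integrable_dirac (by simp)).smul_measure (by simp)

lemma mu3_int (p q r x y : ℝ) (f : ℝ → ℝ) : Integrable f (mu3 p q r x y) :=
  ((dirac_int p x f).add_measure (dirac_int q y f)).add_measure (dirac_int r 0 f)

lemma mu3_integral {p q r : ℝ} (hp : 0 ≤ p) (hq : 0 ≤ q) (hr : 0 ≤ r) (x y : ℝ) (f : ℝ → ℝ) :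
    ∫ z, f z ∂(mu3 p q r x y) = p * f x + q * f y + r * f 0 := by
  rw [mu3, integral_add_measure ((dirac_int p x f).add_measure (dirac_int q y f)) (dirac_int r 0 f),
    integral_add_measure (dirac_int p x f) (dirac_int q y f)]
  simp [hp, hq, hr]

lemma mu3_tail (p q r x y z : ℝ) (hz : |x| + |y| ≤ z) :
    mu3 p q r x y {w | z < |w|} = 0 := by
  have hx := abs_nonneg x
  have hy := abs_nonneg y
  have hm : MeasurableSet {w : ℝ | z < |w|} := measurableSet_lt (by fun_prop) (by fun_prop)
  have h1 : ¬ z < |x| := by linarith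
  have h2 : ¬ z < |y| := by linarith
  have h3 : ¬ z < 0 := by linarith
  simp [mu3, Measure.dirac_apply' _ hm, Set.indicator, h1, h2, h3]

lemma prod_moments (μ : Measure ℝ) [IsProbabilityMeasure μ]
    (hi : ∀ f : ℝ → ℝ, Integrable f μ) (α β M3 M4 : ℝ)
    (m1 : ∫ x, x ∂μ = 0) (m2 : ∫ x, x ^ 2 ∂μ = 1) (m3 : ∫ x, x ^ 3 ∂μ = M3)
    (m4 : ∫ x, x ^ 4 ∂μ = M4) :
    (∫ w, (α * w.1 + β * w.2) ∂(μ.prod (gaussianReal 0 1))) = 0 ∧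
    (∫ w, (α * w.1 + β * w.2) ^ 2 ∂(μ.prod (gaussianReal 0 1))) = α ^ 2 + β ^ 2 ∧
    (∫ w, (α * w.1 + β * w.2) ^ 3 ∂(μ.prod (gaussianReal 0 1))) = α ^ 3 * M3 ∧
    (∫ w, (α * w.1 + β * w.2) ^ 4 ∂(μ.prod (gaussianReal 0 1)))
      = α ^ 4 * M4 + 6 * α ^ 2 * β ^ 2 + 3 * β ^ 4 := by
  obtain ⟨g1, g2, g3, g4⟩ := gauss_moments
  have key : ∀ i j : ℕ, ∀ c : ℝ,
      Integrable (fun w : ℝ × ℝ => c * (w.1 ^ i * w.2 ^ j)) (μ.prod (gaussianReal 0 1)) :=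
    fun i j c => ((hi (fun x => x ^ i)).mul_prod (gauss_int j)).const_mul c
  have A : ∀ {f g : ℝ × ℝ → ℝ}, Integrable f (μ.prod (gaussianReal 0 1)) →
      Integrable g (μ.prod (gaussianReal 0 1)) →
      Integrable (fun w => f w + g w) (μ.prod (gaussianReal 0 1)) := fun hf hg => hf.add hg
  have val : ∀ i j : ℕ, ∀ c : ℝ,
      ∫ w : ℝ × ℝ, c * (w.1 ^ i * w.2 ^ j) ∂(μ.prod (gaussianReal 0 1))
        = c * ((∫ x, x ^ i ∂μ) * ∫ x, x ^ j ∂(gaussianReal 0 1)) := by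
    intro i j c
    rw [integral_const_mul, integral_prod_mul (fun x : ℝ => x ^ i) (fun x : ℝ => x ^ j)]
  refine ⟨?_, ?_, ?_, ?_⟩
  · have : ∀ w : ℝ × ℝ, α * w.1 + β * w.2 = α * (w.1 ^ 1 * w.2 ^ 0) + β * (w.1 ^ 0 * w.2 ^ 1) := by
      intro w; ring
    simp_rw [this]
    rw [integral_add (key _ _ _) (key _ _ _), val, val]
    simp [m1, g1]
  · have : ∀ w : ℝ × ℝ, (α * w.1 + β * w.2) ^ 2 = α ^ 2 * (w.1 ^ 2 * w.2 ^ 0)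
        + (2 * α * β) * (w.1 ^ 1 * w.2 ^ 1) + β ^ 2 * (w.1 ^ 0 * w.2 ^ 2) := by
      intro w; ring
    simp_rw [this]
    rw [integral_add (A (key _ _ _) (key _ _ _)) (key _ _ _),
      integral_add (key _ _ _) (key _ _ _), val, val, val]
    simp [m1, g1, m2, g2]
  · have : ∀ w : ℝ × ℝ, (α * w.1 + β * w.2) ^ 3 = α ^ 3 * (w.1 ^ 3 * w.2 ^ 0)
        + (3 * α ^ 2 * β) * (w.1 ^ 2 * w.2 ^ 1) + (3 * α * β ^ 2) * (w.1 ^ 1 * w.2 ^ 2)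
        + β ^ 3 * (w.1 ^ 0 * w.2 ^ 3) := by
      intro w; ring
    simp_rw [this]
    rw [integral_add (A (A (key _ _ _) (key _ _ _)) (key _ _ _)) (key _ _ _),
      integral_add (A (key _ _ _) (key _ _ _)) (key _ _ _),
      integral_add (key _ _ _) (key _ _ _), val, val, val, val]
    simp [m1, g1, m2, g2, m3, g3]
  · have : ∀ w : ℝ × ℝ, (α * w.1 + β * w.2) ^ 4 = α ^ 4 * (w.1 ^ 4 * w.2 ^ 0)
        + (4 * α ^ 3 * β) * (w.1 ^ 3 * w.2 ^ 1) + (6 * α ^ 2 * β ^ 2) * (w.1 ^ 2 * w.2 ^ 2)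
        + (4 * α * β ^ 3) * (w.1 ^ 1 * w.2 ^ 3) + β ^ 4 * (w.1 ^ 0 * w.2 ^ 4) := by
      intro w; ring
    simp_rw [this]
    rw [integral_add (A (A (A (key _ _ _) (key _ _ _)) (key _ _ _)) (key _ _ _)) (key _ _ _),
      integral_add (A (A (key _ _ _) (key _ _ _)) (key _ _ _)) (key _ _ _),
      integral_add (A (key _ _ _) (key _ _ _)) (key _ _ _),
      integral_add (key _ _ _) (key _ _ _), val, val, val, val, val]
    simp [m1, g1, m2, g2, m3, g3, m4, g4]
    ring

lemma exists_three (a v : ℝ) (hv : 1 ≤ v) : ∃ p q r x y : ℝ, 0 ≤ p ∧ 0 ≤ q ∧ 0 ≤ r ∧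
    p + q + r = 1 ∧ p * x + q * y = 0 ∧ p * x ^ 2 + q * y ^ 2 = 1 ∧
    p * x ^ 3 + q * y ^ 3 = a ∧ p * x ^ 4 + q * y ^ 4 = a ^ 2 + v := by
  obtain ⟨s, hs⟩ : ∃ s, s = Real.sqrt (a ^ 2 + 4 * v) := ⟨_, rfl⟩
  have hs2 : s ^ 2 = a ^ 2 + 4 * v := by rw [hs]; exact Real.sq_sqrt (by positivity)
  have hs0 : 0 ≤ s := by rw [hs]; positivity
  have hlt : |a| < s := abs_lt_of_sq_lt_sq (by linarith) hs0
  obtain ⟨l1, l2⟩ := abs_lt.1 hlt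
  obtain ⟨x, hx⟩ : ∃ x, x = (a + s) / 2 := ⟨_, rfl⟩
  obtain ⟨u, hu⟩ : ∃ u, u = (s - a) / 2 := ⟨_, rfl⟩
  have x0 : 0 < x := by linarith
  have u0 : 0 < u := by linarith
  have hxu : x * u = v := by rw [hx, hu]; nlinarith
  have ha : a = x - u := by rw [hx, hu]; ring
  have hsum : 1 / (x * (x + u)) + 1 / (u * (x + u)) = 1 / v := by
    rw [← hxu]; field_simp; ring
  have hv1 : 1 / v ≤ 1 := by rw [div_le_one (by linarith)]; exact hv
  refine ⟨1 / (x * (x + u)), 1 / (u * (x + u)), 1 - 1 / v, x, -u, by positivity, by positivity,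
    by linarith, by linarith, ?_, ?_, ?_, ?_⟩
  · field_simp; ring
  · field_simp
  · rw [ha]; field_simp; ring
  · rw [ha, ← hxu]; field_simp; ring

/-- (Moment matching with a small Gaussian component.)  For every
`C₁ > 0` there are `γ₀, C > 0` such that: for all `m₃, m₄ ∈ ℝ` with `m₄ − m₃² − 1 ≥ 0` and
`m₄ ≤ C₁`, and every `γ ∈ (0, γ₀)`, there is a probability space carrying independent real
random variables `ζ_γ` (with subexponential tails) and `ζ_G` (standard Gaussian) such that
`ζ′ := √(1−γ) ζ_γ + √γ ζ_G` satisfies `E ζ′ = 0`, `E ζ′² = 1`, `E ζ′³ = m₃` and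
`|E ζ′⁴ − m₄| ≤ C γ`. -/
theorem stmt_17 (C₁ : ℝ) (hC₁ : 0 < C₁) :
    ∃ γ₀ C : ℝ, 0 < γ₀ ∧ 0 < C ∧
      ∀ m₃ m₄ : ℝ, 0 ≤ m₄ - m₃ ^ 2 - 1 → m₄ ≤ C₁ →
      ∀ γ : ℝ, γ ∈ Set.Ioo 0 γ₀ →
      ∃ (Ω : Type) (_ : MeasurableSpace Ω) (P : Measure Ω) (_ : IsProbabilityMeasure P)
        (X Y : Ω → ℝ),
        Measurable X ∧ Measurable Y ∧
        IndepFun X Y P ∧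
        Measure.map Y P = gaussianReal 0 1 ∧
        (∃ C₂ : ℝ, 0 < C₂ ∧ ∃ θ : ℝ, 1 < θ ∧
          ∀ x : ℝ, 0 < x →
            P {ω | x < |X ω|} ≤ ENNReal.ofReal (C₂ * Real.exp (-(x ^ (1 / θ))))) ∧
        (∫ ω, (Real.sqrt (1 - γ) * X ω + Real.sqrt γ * Y ω) ∂P) = 0 ∧
        (∫ ω, (Real.sqrt (1 - γ) * X ω + Real.sqrt γ * Y ω) ^ 2 ∂P) = 1 ∧
        (∫ ω, (Real.sqrt (1 - γ) * X ω + Real.sqrt γ * Y ω) ^ 3 ∂P) = m₃ ∧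
        |(∫ ω, (Real.sqrt (1 - γ) * X ω + Real.sqrt γ * Y ω) ^ 4 ∂P) - m₄| ≤ C * γ := by
  refine ⟨1 / 2, 6 * C₁ + 6, by norm_num, by positivity, ?_⟩
  intro m₃ m₄ h34 h4 γ hγ
  obtain ⟨γ0, γ1⟩ := hγ
  have hg : 0 < 1 - γ := by linarith
  obtain ⟨α, hα⟩ : ∃ α, α = Real.sqrt (1 - γ) := ⟨_, rfl⟩
  obtain ⟨β, hβ⟩ : ∃ β, β = Real.sqrt γ := ⟨_, rfl⟩
  have hα2 : α ^ 2 = 1 - γ := by rw [hα]; exact Real.sq_sqrt hg.le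
  have hβ2 : β ^ 2 = γ := by rw [hβ]; exact Real.sq_sqrt γ0.le
  have hα0 : 0 < α := by rw [hα]; exact Real.sqrt_pos.2 hg
  rw [← hα, ← hβ]
  obtain ⟨p, q, r, x, y, hp, hq, hr, hsum, e1, e2, e3, e4⟩ :=
    exists_three (m₃ / α ^ 3) (m₄ - m₃ ^ 2) (by linarith)
  have := mu3_prob hp hq hr hsum x y
  obtain ⟨f1, f2, f3, f4⟩ := prod_moments (mu3 p q r x y) (mu3_int p q r x y) α β
    (m₃ / α ^ 3) ((m₃ / α ^ 3) ^ 2 + (m₄ - m₃ ^ 2))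
    (by rw [mu3_integral hp hq hr]; linarith)
    (by rw [mu3_integral hp hq hr]; linarith)
    (by rw [mu3_integral hp hq hr]; linarith)
    (by rw [mu3_integral hp hq hr]; linarith)
  refine ⟨ℝ × ℝ, inferInstance, (mu3 p q r x y).prod (gaussianReal 0 1), inferInstance,
    Prod.fst, Prod.snd, measurable_fst, measurable_snd, ?_, ?_, ?_, f1, ?_, ?_, ?_⟩
  · exact indepFun_prod (X := fun x : ℝ => x) (Y := fun x : ℝ => x) measurable_id measurable_id
  · simp
  · refine ⟨Real.exp ((|x| + |y|) ^ (1 / 2 : ℝ)), Real.exp_pos _, 2, by norm_num, ?_⟩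
    intro z hz
    rcases le_total (|x| + |y|) z with h | h
    · have : {ω : ℝ × ℝ | z < |ω.1|} = {w : ℝ | z < |w|} ×ˢ Set.univ := by ext; simp
      rw [this, Measure.prod_prod, mu3_tail _ _ _ _ _ _ h]
      simp
    · refine prob_le_one.trans ?_
      rw [← Real.exp_add]
      rw [ENNReal.one_le_ofReal]
      apply Real.one_le_exp
      have := Real.rpow_le_rpow hz.le h (by norm_num : (0 : ℝ) ≤ 1 / 2)
      linarith
  · rw [f2]; linarith
  · rw [f3]; field_simp
  · rw [f4]
    have h6 : α ^ 4 * ((m₃ / α ^ 3) ^ 2 + (m₄ - m₃ ^ 2)) + 6 * α ^ 2 * β ^ 2 + 3 * β ^ 4 - m₄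
        = m₃ ^ 2 * (1 / (1 - γ) - (1 - γ) ^ 2) - (2 * γ - γ ^ 2) * m₄ + 6 * γ - 3 * γ ^ 2 := by
      have : α ^ 4 * (m₃ / α ^ 3) ^ 2 = m₃ ^ 2 * (1 / (1 - γ)) := by
        rw [← hα2]; field_simp
      have a4 : α ^ 4 = (1 - γ) ^ 2 := by rw [← hα2]; ring
      have b4 : β ^ 4 = γ ^ 2 := by rw [← hβ2]; ring
      rw [mul_add, this, a4, b4, hα2, hβ2]; ring
    rw [h6]
    have k1 : 1 / (1 - γ) ≤ 1 + 2 * γ := by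
      rw [div_le_iff₀ hg]; nlinarith
    have k2 : 1 ≤ 1 / (1 - γ) := by
      rw [le_div_iff₀ hg]; linarith
    obtain ⟨D, hD⟩ : ∃ D, D = 1 / (1 - γ) - (1 - γ) ^ 2 := ⟨_, rfl⟩
    rw [← hD]
    have d0 : 0 ≤ D := by rw [hD]; nlinarith only [γ0, γ1, k2]
    have d1 : D ≤ 4 * γ := by rw [hD]; linarith [sq_nonneg γ, (by ring : (1 - γ) ^ 2 = 1 - 2 * γ + γ ^ 2)]
    have s0 := sq_nonneg m₃
    have s1 : m₃ ^ 2 ≤ C₁ := by linarith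
    have t1 : m₃ ^ 2 * D ≤ C₁ * (4 * γ) := mul_le_mul s1 d1 d0 hC₁.le
    have t0 : 0 ≤ m₃ ^ 2 * D := mul_nonneg s0 d0
    have m40 : 0 ≤ m₄ := by linarith
    have gsq : γ ^ 2 ≤ γ := by nlinarith
    have gg : 0 ≤ 2 * γ - γ ^ 2 := by linarith
    have u0 : 0 ≤ (2 * γ - γ ^ 2) * m₄ := mul_nonneg gg m40
    have u1 : (2 * γ - γ ^ 2) * m₄ ≤ (2 * γ) * C₁ :=
      mul_le_mul (by linarith [sq_nonneg γ]) h4 m40 (by linarith)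
    have cg : 0 < C₁ * γ := mul_pos hC₁ γ0
    rw [abs_le]
    have e : (6 * C₁ + 6) * γ = 6 * (C₁ * γ) + 6 * γ := by ring
    have g2 := sq_nonneg γ
    rw [e]
    constructor <;> linarith
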